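/- Fix 1 ≤ k ≤ m+2n−1. Let A be the set of pairs ((V_i)_{i ∈ {0,…,m+2n}\{k}}, x) where x ∈ S_n and (V_i) is a partial flag in ℂ^{m+2n} (dim V_i = i, V_0 = 0, V_{m+2n} = ℂ^{m+2n}, V_i ⊆ V_j for i ≤ j) with x V_{k+1} ⊆ V_{k−1} and x V_i ⊆ V_{i−1} for all i ∉ {k, k+1}, i ≥ 1; every such x has dim ker x = 2, so Φ(x) := γ ∘ x ∘ (γ|_{im x})^{−1} is defined. Let B be the set of pairs ((W_j)_{j=0,…,m+2n−2}, y) where y ∈ S_{n−1} and (W_j) is a complete flag in ℂ^{m+2n−2} (dim W_j = j, W_0 = 0, W_{m+2n−2} = ℂ^{m+2n−2}) with y W_j ⊆ W_{j−1} for all j ≥ 1. Then the map α sending ((V_i), x) to ((W_j), Φ(x)), where W_j = γ(V_j) for 0 ≤ j ≤ k−1 and W_j = γ(x V_{j+2}) for k−1 ≤ j ≤ m+2n−2, is a well-defined bijection from A onto B. (Proposition 2.3 of the paper: the set-theoretic isomorphism S_{n+1} ×_{sl} T*P_{k,n+1} ≅ S_n ×_{sl} T*B_n, stated here with indices (n,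 n−1).) -/

import Mathlib

/-!
For every `x ∈ S_n` the composite `τ = γ ∘ x = γ ∘ z_n` is the same surjection
`ℂ^(m+2n) → ℂ^(m+2n-2)`, with two-dimensional kernel. When `dim ker x = 2`, the inclusion
`ker x ⊆ ker τ` is an equality, so `x = σ ∘ τ` for a section `σ` of `γ`
(`exists_section`); then `σ` inverts `γ` on `im x` and `Φ(x) = τ ∘ σ` (`Phi_comp`).
A section `σ` amounts to the two free rows `m+n` and `m+2n`, and these become the free rows of
`τ ∘ σ`; the vanishing conditions of `S_n` and `S_{n-1}` correspond. Hence `σ ∘ τ ↦ τ ∘ σ`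
is a bijection from the `x ∈ S_n` with `dim ker x = 2` onto `S_{n-1}` (`tau_comp_mem`,
`tau_sigmaOf`, `sigmaOf_tau_mem`, `section_unique`).

For a point of `A`, the map `x : V_{k+1} → V_{k-1}` lowers the dimension by two, which forces
`ker x = ker τ ⊆ V_{k+1}` and `V_{k-1} = x V_{k+1} ⊆ im x` (`SetA_data`). Thus
`W_j = γ V_j` for `j ≤ k-1` and `W_j = τ V_{j+2}` for `j ≥ k-1` have the right dimensions, and
the flag is recovered by `V_j = σ W_j` for `j ≤ k-1` and `V_{j+2} = τ⁻¹ W_j` for `j ≥ k-1`.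
These formulas also define the preimage of an arbitrary point of `B`.
-/

open Module BigOperators

noncomputable section

/-- The `k`-th standard basis vector `u_k` of `ℂ^(m+2n)`, indexed `1`-based;
it is zero if `k` is out of the range `1, …, m+2n`. -/
def stdVec (m n : ℕ) (k : ℕ) : Fin (m + 2*n) → ℂ := fun i => if (i : ℕ) + 1 = k then 1 else 0

/-- The matrix of the two-block nilpotent `z_n` of Jordan type `(m+n, n)`:
`z_n u_i = u_{i-1}` for `2 ≤ i ≤ m+n` and for `m+n+2 ≤ i ≤ m+2n`, and
`z_n u_1 = z_n u_{m+n+1} = 0`. -/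
def zMat (m n : ℕ) : Matrix (Fin (m + 2*n)) (Fin (m + 2*n)) ℂ :=
  fun i j => if (j : ℕ) = (i : ℕ) + 1 ∧ (j : ℕ) ≠ m + n then 1 else 0

/-- The two-block nilpotent `z_n` as an endomorphism of `ℂ^(m+2n)`. -/
def zn (m n : ℕ) : Module.End ℂ (Fin (m + 2*n) → ℂ) := Matrix.toLin' (zMat m n)

/-- The enlarged slice `S_n' ⊆ End(ℂ^(m+2n))`: the endomorphisms whose matrix agrees
with that of `z_n` outside rows `m+n` and `m+2n`, i.e. `x u_j - z_n u_j` lies in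
`span{u_{m+n}, u_{m+2n}}` for every `j`. -/
def slice' (m n : ℕ) : Set (Module.End ℂ (Fin (m + 2*n) → ℂ)) :=
  { x | ∀ j : ℕ, x (stdVec m n j) - zn m n (stdVec m n j) ∈
      Submodule.span ℂ {stdVec m n (m + n), stdVec m n (m + 2*n)} }

/-- The matrix entry `x_{p,q}` (`1`-based) of an endomorphism of `ℂ^(m+2n)`
in the standard basis `u_1, …, u_{m+2n}`. -/
def entry (m n : ℕ) (x : Module.End ℂ (Fin (m + 2*n) → ℂ)) (p q : ℕ) : ℂ :=
  ∑ i, stdVec m n p i * x (stdVec m n q) i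

/-- The Mirkovic–Vybornov slice `S_n ⊆ S_n'`: for `n ≥ 1` it consists of those
`x ∈ S_n'` whose matrix entries `x_{m+2n, j}` vanish for `n+1 ≤ j ≤ m+n`
(for `n = 0` the slices `S_0` and `S_0'` coincide, so no further condition is imposed). -/
def MVslice (m n : ℕ) : Set (Module.End ℂ (Fin (m + 2*n) → ℂ)) :=
  { x | x ∈ slice' m n ∧
      ∀ j : ℕ, n + 1 ≤ j → j ≤ m + n → n ≠ 0 → entry m n x (m + 2*n) j = 0 }

/-- The matrix of the projection `γ : ℂ^(m+2n) → ℂ^(m+2n-2)`: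
`γ u_i = u_i` for `1 ≤ i ≤ m+n-1`, `γ u_{m+n} = 0`,
`γ u_{m+n+j} = u_{m+n-1+j}` for `1 ≤ j ≤ n-1`, and `γ u_{m+2n} = 0`. -/
def gamMat (m n : ℕ) : Matrix (Fin (m + 2*(n-1))) (Fin (m + 2*n)) ℂ :=
  fun i j => if ((j : ℕ) = (i : ℕ) ∧ (j : ℕ) + 1 < m + n) ∨
      ((j : ℕ) = (i : ℕ) + 1 ∧ m + n ≤ (j : ℕ)) then 1 else 0

/-- The linear map `γ : ℂ^(m+2n) → ℂ^(m+2n-2)`. -/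
def gam (m n : ℕ) : (Fin (m + 2*n) → ℂ) →ₗ[ℂ] (Fin (m + 2*(n-1)) → ℂ) :=
  Matrix.toLin' (gamMat m n)

-- `Φ(x) := γ ∘ x ∘ (γ|_{im x})⁻¹ ∈ End(ℂ^(m+2n-2))`, defined whenever `γ` restricts
-- to a bijection from `im x` onto `ℂ^(m+2n-2)` (junk value `0` otherwise).
open Classical in
noncomputable def Phi (m n : ℕ) (x : Module.End ℂ (Fin (m + 2*n) → ℂ)) :
    Module.End ℂ (Fin (m + 2*(n-1)) → ℂ) :=
  if h : Function.Bijective ((gam m n).domRestrict (LinearMap.range x)) then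
    (gam m n) ∘ₗ x ∘ₗ (LinearMap.range x).subtype ∘ₗ
      (LinearEquiv.ofBijective ((gam m n).domRestrict (LinearMap.range x)) h).symm.toLinearMap
  else 0


/-- Index set for partial flags in `ℂ^(m+2n)` missing the `k`-th step:
`{0, …, m+2n} ∖ {k}`. -/
abbrev flagIdxA (m n k : ℕ) := {i : ℕ // i ≤ m + 2*n ∧ i ≠ k}

/-- Index set for complete flags in `ℂ^(m+2n-2)`: `{0, …, m+2n−2}`. -/
abbrev flagIdxB (m n : ℕ) := {j : ℕ // j ≤ m + 2*n - 2}

/-- The set `A` of pairs `((V_i)_{i ∈ {0,…,m+2n}∖{k}}, x)`: `x ∈ S_n` and `(V_i)` is a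
partial flag with `x V_{k+1} ⊆ V_{k−1}` and `x V_i ⊆ V_{i−1}` for the remaining
indices. -/
def SetA (m n k : ℕ) : Set ((flagIdxA m n k → Submodule ℂ (Fin (m + 2*n) → ℂ)) ×
    Module.End ℂ (Fin (m + 2*n) → ℂ)) :=
  { p | p.2 ∈ MVslice m n ∧
      (∀ i, Module.finrank ℂ (p.1 i) = i.val) ∧
      (∀ i, i.val = 0 → p.1 i = ⊥) ∧
      (∀ i, i.val = m + 2*n → p.1 i = ⊤) ∧
      (∀ i j, i.val ≤ j.val → p.1 i ≤ p.1 j) ∧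
      (∀ i j, i.val = k + 1 → j.val = k - 1 → ∀ v ∈ p.1 i, p.2 v ∈ p.1 j) ∧
      (∀ i j, i.val = j.val + 1 → ∀ v ∈ p.1 i, p.2 v ∈ p.1 j) }

/-- The set `B` of pairs `((W_j)_{j = 0,…,m+2n−2}, y)`: `y ∈ S_{n−1}` and `(W_j)` is a
complete flag in `ℂ^(m+2n−2)` with `y W_j ⊆ W_{j−1}`. -/
def SetB (m n : ℕ) : Set ((flagIdxB m n → Submodule ℂ (Fin (m + 2*(n-1)) → ℂ)) ×
    Module.End ℂ (Fin (m + 2*(n-1)) → ℂ)) :=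
  { p | p.2 ∈ MVslice m (n-1) ∧
      (∀ j, Module.finrank ℂ (p.1 j) = j.val) ∧
      (∀ j, j.val = 0 → p.1 j = ⊥) ∧
      (∀ j, j.val = m + 2*n - 2 → p.1 j = ⊤) ∧
      (∀ i j, i.val ≤ j.val → p.1 i ≤ p.1 j) ∧
      (∀ i j, i.val = j.val + 1 → ∀ v ∈ p.1 i, p.2 v ∈ p.1 j) }

/-- The map `α` sending `((V_i), x)` to `((W_j), Φ(x))`, where `W_j = γ(V_j)` for
`j ≤ k−1` and `W_j = γ(x V_{j+2})` for `k−1 ≤ j ≤ m+2n−2`. -/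
def alphaMap (m n k : ℕ) (hn : 1 ≤ n) (hk1 : 1 ≤ k)
    (p : (flagIdxA m n k → Submodule ℂ (Fin (m + 2*n) → ℂ)) ×
      Module.End ℂ (Fin (m + 2*n) → ℂ)) :
    (flagIdxB m n → Submodule ℂ (Fin (m + 2*(n-1)) → ℂ)) ×
      Module.End ℂ (Fin (m + 2*(n-1)) → ℂ) :=
  (fun j =>
    if h : j.val ≤ k - 1 then
      (p.1 ⟨j.val, by have := j.2; omega⟩).map (gam m n)
    else
      ((p.1 ⟨j.val + 2, by have := j.2; omega⟩).map p.2).map (gam m n),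
   Phi m n p.2)


/-! ### Coordinates: `γ`, `z_n`, `τ` and the slices -/

/-- The map `τ = γ ∘ z_n`, equal to `γ ∘ x` for every `x` in the slice. -/
def tauMap (m n : ℕ) : (Fin (m + 2*n) → ℂ) →ₗ[ℂ] (Fin (m + 2*(n-1)) → ℂ) :=
  gam m n ∘ₗ zn m n

theorem apply_eq_of_val {N : ℕ} (v : Fin N → ℂ) {a b : Fin N} (h : (a : ℕ) = b) : v a = v b :=
  congrArg v (Fin.ext h)

theorem gam_apply (m n : ℕ) (hn : 1 ≤ n) (v : Fin (m + 2*n) → ℂ) (i : Fin (m + 2*(n-1))) :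
    gam m n v i = v ⟨if (i : ℕ) + 1 < m + n then i else i + 1, by split_ifs <;> omega⟩ := by
  rw [gam, Matrix.toLin'_apply, Matrix.mulVec, dotProduct, Finset.sum_eq_single
    ⟨if (i : ℕ) + 1 < m + n then i else i + 1, by split_ifs <;> omega⟩]
  · rw [gamMat, if_pos, one_mul]
    dsimp only
    split_ifs <;> omega
  · intro b _ hb
    rw [gamMat, if_neg, zero_mul]
    intro h
    apply hb
    ext
    dsimp only
    split_ifs <;> omega
  · simp

theorem zn_apply (m n : ℕ) (v : Fin (m + 2*n) → ℂ) (i : Fin (m + 2*n)) :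
    zn m n v i = if h : (i : ℕ) + 1 < m + 2*n ∧ (i : ℕ) + 1 ≠ m + n then v ⟨i + 1, h.1⟩ else 0 := by
  rw [zn, Matrix.toLin'_apply, Matrix.mulVec, dotProduct]
  split_ifs with h
  · rw [Finset.sum_eq_single ⟨i + 1, h.1⟩]
    · rw [zMat, if_pos ⟨rfl, h.2⟩, one_mul]
    · intro b _ hb
      rw [zMat, if_neg, zero_mul]
      rintro ⟨h1, -⟩
      exact hb (Fin.ext h1)
    · simp
  · apply Finset.sum_eq_zero
    intro b _
    rw [zMat, if_neg, zero_mul]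
    rintro ⟨h1, h2⟩
    have := b.2
    omega

theorem zn_apply_of (m n : ℕ) (v : Fin (m + 2*n) → ℂ) (i : Fin (m + 2*n))
    (h1 : (i : ℕ) + 1 < m + 2*n) (h2 : (i : ℕ) + 1 ≠ m + n) : zn m n v i = v ⟨i + 1, h1⟩ :=
  (zn_apply m n v i).trans (dif_pos ⟨h1, h2⟩)

theorem tau_apply (m n : ℕ) (hn : 1 ≤ n) (v : Fin (m + 2*n) → ℂ) (i : Fin (m + 2*(n-1))) :
    tauMap m n v i = v ⟨if (i : ℕ) + 1 < m + n then i + 1 else i + 2, by split_ifs <;> omega⟩ := by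
  have hi := i.2
  rw [tauMap, LinearMap.comp_apply, gam_apply m n hn, zn_apply, dif_pos]
  · refine apply_eq_of_val _ ?_
    dsimp only
    split_ifs <;> omega
  · dsimp only
    split_ifs <;> omega

theorem stdVec_succ (m n : ℕ) (i : Fin (m + 2*n)) : stdVec m n (i + 1) = Pi.single i 1 := by
  ext l
  simp only [stdVec, Pi.single_apply, Fin.ext_iff, Nat.add_right_cancel_iff]

theorem entry_eq (m n : ℕ) (x : Module.End ℂ (Fin (m + 2*n) → ℂ)) (i : Fin (m + 2*n)) (p q : ℕ)
    (hp : p = i + 1) : entry m n x p q = x (stdVec m n q) i := by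
  subst hp
  rw [entry, stdVec_succ, Finset.sum_eq_single i]
  · simp
  · intro b _ hb
    simp [hb]
  · simp

/-- Membership in `S_n'`, read off coordinatewise; also valid for `n = 0`. -/
theorem mem_slice'_iff (m n : ℕ) (x : Module.End ℂ (Fin (m + 2*n) → ℂ)) :
    x ∈ slice' m n ↔ ∀ v, ∀ i : Fin (m + 2*n), (i : ℕ) + 1 ≠ m + n → (i : ℕ) + 1 ≠ m + 2*n →
      x v i = zn m n v i := by
  constructor
  · intro hx v i h1 h2
    have key : (LinearMap.proj i : (Fin (m + 2*n) → ℂ) →ₗ[ℂ] ℂ) ∘ₗ x =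
        LinearMap.proj i ∘ₗ zn m n := by
      apply (Pi.basisFun ℂ _).ext
      intro j
      have hj := hx (j + 1)
      have hle : Submodule.span ℂ {stdVec m n (m + n), stdVec m n (m + 2*n)} ≤
          LinearMap.ker (LinearMap.proj i : (Fin (m + 2*n) → ℂ) →ₗ[ℂ] ℂ) := by
        rw [Submodule.span_le]
        rintro w (rfl | rfl)
        · simp [stdVec, h1]
        · simp [stdVec, h2]
      have := hle hj
      rw [stdVec_succ] at this
      simpa [sub_eq_zero] using this
    exact LinearMap.congr_fun key v
  · intro h j
    set w := x (stdVec m n j) - zn m n (stdVec m n j) with hw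
    rw [pi_eq_sum_univ' w]
    apply Submodule.sum_mem
    intro i _
    by_cases h1 : (i : ℕ) + 1 = m + n
    · apply Submodule.smul_mem
      apply Submodule.subset_span
      left
      rw [← h1, stdVec_succ]
    by_cases h2 : (i : ℕ) + 1 = m + 2*n
    · apply Submodule.smul_mem
      apply Submodule.subset_span
      right
      exact (stdVec_succ m n i).symm.trans (congrArg (stdVec m n) h2)
    · have : w i = 0 := by simp [hw, h _ i h1 h2]
      rw [this, zero_smul]
      exact Submodule.zero_mem _

theorem gam_comp_of_mem_slice' (m n : ℕ) (hn : 1 ≤ n) (x : Module.End ℂ (Fin (m + 2*n) → ℂ))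
    (hx : x ∈ slice' m n) (v : Fin (m + 2*n) → ℂ) : gam m n (x v) = tauMap m n v := by
  ext i
  have hi := i.2
  rw [tauMap, LinearMap.comp_apply, gam_apply m n hn, gam_apply m n hn]
  apply (mem_slice'_iff m n x).1 hx
  · dsimp only
    split_ifs <;> omega
  · dsimp only
    split_ifs <;> omega

theorem tau_surjective (m n : ℕ) (hn : 1 ≤ n) : Function.Surjective (tauMap m n) := by
  intro w
  refine ⟨fun l => if h : 1 ≤ (l : ℕ) ∧ (l : ℕ) < m + n then w ⟨l - 1, by omega⟩ else
    if h : m + n + 1 ≤ (l : ℕ) then w ⟨l - 2, by omega⟩ else 0, ?_⟩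
  ext i
  have hi := i.2
  rw [tau_apply m n hn]
  dsimp only
  by_cases h : (i : ℕ) + 1 < m + n
  · simp [h]
  · have h' : ¬ ((i : ℕ) + 2 < m + n) := by omega
    have h'' : m + n ≤ (i : ℕ) + 1 := by omega
    simp [h, h', h'']

theorem finrank_ker_tau (m n : ℕ) (hn : 1 ≤ n) : finrank ℂ (LinearMap.ker (tauMap m n)) = 2 := by
  have h := LinearMap.finrank_range_add_finrank_ker (tauMap m n)
  rw [LinearMap.range_eq_top.2 (tau_surjective m n hn), finrank_top] at h
  simp only [finrank_fintype_fun_eq_card, Fintype.card_fin] at h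
  omega

theorem tau_stdVec (m n j : ℕ) (hn : 1 ≤ n) (hj : j + 1 ≤ m + n) :
    tauMap m n (stdVec m n (j + 1)) = stdVec m (n - 1) j := by
  ext i
  rw [tau_apply m n hn]
  simp only [stdVec]
  congr 1
  split_ifs <;> simp
  omega

/-! ### Correspondence between `S_n` and `S_{n-1}` through sections of `γ` -/

/-- A section `σ` of `γ` with `σ ∘ τ ∈ S_n` has `τ ∘ σ ∈ S_{n-1}`. -/
theorem tau_comp_mem (m n : ℕ) (hn : 1 ≤ n)
    (σ : (Fin (m + 2*(n-1)) → ℂ) →ₗ[ℂ] (Fin (m + 2*n) → ℂ))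
    (hσ : ∀ w, gam m n (σ w) = w) (hx : σ ∘ₗ tauMap m n ∈ MVslice m n) :
    tauMap m n ∘ₗ σ ∈ MVslice m (n-1) := by
  refine ⟨(mem_slice'_iff _ _ _).2 ?_, ?_⟩
  · intro v i h1 h2
    have hi := i.2
    rw [LinearMap.comp_apply, tau_apply m n hn, zn_apply_of _ _ _ _ (by omega) h1]
    conv_rhs => rw [← hσ v, gam_apply m n hn]
    refine apply_eq_of_val _ ?_
    dsimp only
    split_ifs <;> omega
  · intro j hj1 hj2 hn'
    rw [entry_eq m (n-1) _ ⟨m + 2*(n-1) - 1, by omega⟩ _ _ (by dsimp only; omega),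
      LinearMap.comp_apply, tau_apply m n hn]
    have := hx.2 (j+1) (by omega) (by omega) (by omega)
    rw [entry_eq m n _ ⟨m + 2*n - 1, by omega⟩ _ _ (by dsimp only; omega), LinearMap.comp_apply,
      tau_stdVec m n j hn (by omega)] at this
    rw [← this]
    refine apply_eq_of_val _ ?_
    dsimp only
    split_ifs <;> omega

/-- The section of `γ` obtained from `y ∈ S_{n-1}`: rows `m+n` and `m+2n` of the section are the
last rows of the two blocks of `y`. Those rows are zero when the corresponding block of `y` is
empty. -/
def sigmaOf (m n : ℕ) (y : Module.End ℂ (Fin (m + 2*(n-1)) → ℂ)) :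
    (Fin (m + 2*(n-1)) → ℂ) →ₗ[ℂ] (Fin (m + 2*n) → ℂ) :=
  LinearMap.pi fun l =>
    if h1 : (l : ℕ) + 1 = m + n then
      if h : 2 ≤ m + n then LinearMap.proj ⟨m + n - 2, by omega⟩ ∘ₗ y else 0
    else if h2 : (l : ℕ) + 1 = m + 2*n then
      if h : 2 ≤ n then LinearMap.proj ⟨m + 2*(n-1) - 1, by omega⟩ ∘ₗ y else 0
    else LinearMap.proj ⟨if (l : ℕ) + 1 < m + n then l else l - 1, by split_ifs <;> omega⟩

theorem gam_sigmaOf (m n : ℕ) (hn : 1 ≤ n) (y : Module.End ℂ (Fin (m + 2*(n-1)) → ℂ))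
    (w : Fin (m + 2*(n-1)) → ℂ) : gam m n (sigmaOf m n y w) = w := by
  ext i
  have hi := i.2
  rw [gam_apply m n hn, sigmaOf, LinearMap.pi_apply, dif_neg, dif_neg, LinearMap.proj_apply]
  · refine apply_eq_of_val _ ?_
    dsimp only
    split_ifs <;> omega
  · dsimp only
    split_ifs <;> omega
  · dsimp only
    split_ifs <;> omega

theorem tau_sigmaOf (m n : ℕ) (hn : 1 ≤ n) (y : Module.End ℂ (Fin (m + 2*(n-1)) → ℂ))
    (hy : y ∈ MVslice m (n-1)) : tauMap m n ∘ₗ sigmaOf m n y = y := by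
  refine LinearMap.ext fun v => funext fun i => ?_
  have hi := i.2
  rw [LinearMap.comp_apply, tau_apply m n hn, sigmaOf, LinearMap.pi_apply]
  by_cases h1 : (i : ℕ) + 2 = m + n
  · rw [dif_pos (by dsimp only; split_ifs <;> omega), dif_pos (by omega)]
    rw [LinearMap.comp_apply, LinearMap.proj_apply]
    refine apply_eq_of_val _ ?_
    dsimp only
    omega
  rw [dif_neg (by dsimp only; split_ifs <;> omega)]
  by_cases h2 : (i : ℕ) + 3 = m + 2*n
  · have h3 : 2 ≤ n := by omega
    rw [dif_pos (by dsimp only; split_ifs <;> omega), dif_pos h3]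
    rw [LinearMap.comp_apply, LinearMap.proj_apply]
    refine apply_eq_of_val _ ?_
    dsimp only
    omega
  rw [dif_neg (by dsimp only; split_ifs <;> omega),
    (mem_slice'_iff _ _ _).1 hy.1 v i (by omega) (by omega), zn_apply_of _ _ _ _ (by omega) (by omega),
    LinearMap.proj_apply]
  refine apply_eq_of_val _ ?_
  dsimp only
  split_ifs <;> omega

theorem sigmaOf_tau_mem (m n : ℕ) (hn : 1 ≤ n) (y : Module.End ℂ (Fin (m + 2*(n-1)) → ℂ))
    (hy : y ∈ MVslice m (n-1)) : sigmaOf m n y ∘ₗ tauMap m n ∈ MVslice m n := by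
  refine ⟨(mem_slice'_iff _ _ _).2 ?_, ?_⟩
  · intro v i h1 h2
    have hi := i.2
    rw [LinearMap.comp_apply, sigmaOf, LinearMap.pi_apply, dif_neg h1, dif_neg h2,
      LinearMap.proj_apply, tau_apply m n hn, zn_apply_of _ _ _ _ (by omega) (by omega)]
    refine apply_eq_of_val _ ?_
    dsimp only
    split_ifs <;> omega
  · intro j hj1 hj2 _
    rw [entry_eq m n _ ⟨m + 2*n - 1, by omega⟩ _ _ (by dsimp only; omega), LinearMap.comp_apply]
    obtain ⟨j, rfl⟩ : ∃ j', j = j' + 1 := ⟨j - 1, by omega⟩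
    rw [tau_stdVec m n j hn (by omega), sigmaOf, LinearMap.pi_apply,
      dif_neg (by dsimp only; omega), dif_pos (by dsimp only; omega)]
    split_ifs with h
    · have := hy.2 j (by omega) (by omega) (by omega)
      rwa [entry_eq m (n-1) _ ⟨m + 2*(n-1) - 1, by omega⟩ _ _ (by dsimp only; omega)] at this
    · rfl

/-- A section `σ` of `γ` with `σ ∘ τ ∈ S_n` is determined by `τ ∘ σ`. For `n = 1` the row `m+2`
of `σ` is not seen by `τ`, but it vanishes by the defining equations of `S_1`. -/
theorem section_unique (m n : ℕ) (hn : 1 ≤ n)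
    (σ σ' : (Fin (m + 2*(n-1)) → ℂ) →ₗ[ℂ] (Fin (m + 2*n) → ℂ))
    (hσ : ∀ w, gam m n (σ w) = w) (hx : σ ∘ₗ tauMap m n ∈ MVslice m n)
    (hσ' : ∀ w, gam m n (σ' w) = w) (hx' : σ' ∘ₗ tauMap m n ∈ MVslice m n)
    (h : tauMap m n ∘ₗ σ = tauMap m n ∘ₗ σ') : σ = σ' := by
  refine (Pi.basisFun ℂ _).ext fun i => funext fun l => ?_
  have hi := i.2
  have hl := l.2
  rw [Pi.basisFun_apply]
  set w : Fin (m + 2*(n-1)) → ℂ := Pi.single i 1 with hw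
  have hg : ∀ j : Fin (m + 2*(n-1)),
      (if (j : ℕ) + 1 < m + n then (j : ℕ) else j + 1) = l → σ w l = σ' w l := by
    intro j hj
    have := congrFun ((hσ w).trans (hσ' w).symm) j
    rw [gam_apply m n hn, gam_apply m n hn] at this
    convert this using 2 <;> exact Fin.ext hj.symm
  have ht : ∀ j : Fin (m + 2*(n-1)),
      (if (j : ℕ) + 1 < m + n then (j : ℕ) + 1 else j + 2) = l → σ w l = σ' w l := by
    intro j hj
    have := congrFun (LinearMap.congr_fun h w) j
    rw [LinearMap.comp_apply, LinearMap.comp_apply, tau_apply m n hn, tau_apply m n hn] at this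
    convert this using 2 <;> exact Fin.ext hj.symm
  by_cases h1 : (l : ℕ) + 1 < m + n
  · exact hg ⟨l, by omega⟩ (by dsimp only; split_ifs; rfl)
  by_cases h2 : (l : ℕ) + 1 = m + n
  · exact ht ⟨l - 1, by omega⟩ (by dsimp only; split_ifs <;> omega)
  by_cases h3 : (l : ℕ) + 1 < m + 2*n
  · exact hg ⟨l - 1, by omega⟩ (by dsimp only; split_ifs <;> omega)
  by_cases h4 : 2 ≤ n
  · exact ht ⟨l - 2, by omega⟩ (by dsimp only; split_ifs <;> omega)
  · have hz : ∀ ρ : (Fin (m + 2*(n-1)) → ℂ) →ₗ[ℂ] (Fin (m + 2*n) → ℂ),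
        ρ ∘ₗ tauMap m n ∈ MVslice m n → ρ w l = 0 := by
      intro ρ hρ
      have := hρ.2 (i + 1 + 1) (by omega) (by omega) (by omega)
      rwa [entry_eq m n _ l _ _ (by omega), LinearMap.comp_apply,
        tau_stdVec m n (i + 1) hn (by omega), stdVec_succ] at this
    rw [hz σ hx, hz σ' hx']

/-! ### Sections of `γ` and the map `Φ` -/

theorem finrank_map_of_inj {E F : Type*} [AddCommGroup E] [Module ℂ E]
    [AddCommGroup F] [Module ℂ F] (f : E →ₗ[ℂ] F) (hf : Function.Injective f)
    (V : Submodule ℂ E) : finrank ℂ (V.map f) = finrank ℂ V :=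
  (Submodule.equivMapOfInjective f hf V).finrank_eq.symm

/-- Rank–nullity for the restriction of `f` to a subspace. -/
theorem finrank_map_add_inf_ker {E F : Type*} [AddCommGroup E] [Module ℂ E] [FiniteDimensional ℂ E]
    [AddCommGroup F] [Module ℂ F] (f : E →ₗ[ℂ] F) (V : Submodule ℂ E) :
    finrank ℂ (V.map f) + finrank ℂ (V ⊓ LinearMap.ker f : Submodule ℂ E) = finrank ℂ V := by
  have h := LinearMap.finrank_range_add_finrank_ker (f.domRestrict V)
  have h1 : LinearMap.range (f.domRestrict V) = V.map f := by
    ext w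
    simp [Submodule.mem_map]
  have h2 : (LinearMap.ker (f.domRestrict V)).map V.subtype = V ⊓ LinearMap.ker f := by
    ext w
    simp [Submodule.mem_map, and_comm]
  rw [← h1, ← h2, finrank_map_of_inj V.subtype V.subtype_injective]
  exact h

theorem map_gam_map (m n : ℕ) (σ : (Fin (m + 2*(n-1)) → ℂ) →ₗ[ℂ] (Fin (m + 2*n) → ℂ))
    (hσ : ∀ w, gam m n (σ w) = w) (V : Submodule ℂ (Fin (m + 2*n) → ℂ)) :
    (V.map (σ ∘ₗ tauMap m n)).map (gam m n) = V.map (tauMap m n) := by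
  rw [← Submodule.map_comp]
  congr 1
  refine LinearMap.ext fun v => ?_
  simp [hσ]

/-- If `x = σ ∘ τ` with `σ` a section of `γ`, then `σ` is the inverse of `γ` restricted to `im x`,
whence `Φ(x) = τ ∘ σ`. -/
theorem Phi_comp (m n : ℕ) (hn : 1 ≤ n)
    (σ : (Fin (m + 2*(n-1)) → ℂ) →ₗ[ℂ] (Fin (m + 2*n) → ℂ))
    (hσ : ∀ w, gam m n (σ w) = w) (hx : σ ∘ₗ tauMap m n ∈ slice' m n) :
    Phi m n (σ ∘ₗ tauMap m n) = tauMap m n ∘ₗ σ := by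
  have hmem : ∀ w, σ w ∈ LinearMap.range (σ ∘ₗ tauMap m n) := by
    intro w
    obtain ⟨v, rfl⟩ := tau_surjective m n hn w
    exact ⟨v, rfl⟩
  have hbij : Function.Bijective
      ((gam m n).domRestrict (LinearMap.range (σ ∘ₗ tauMap m n))) := by
    constructor
    · rintro ⟨_, v, rfl⟩ ⟨_, v', rfl⟩ h
      simp only [LinearMap.domRestrict_apply, LinearMap.comp_apply, hσ] at h
      simp only [LinearMap.comp_apply, h]
    · intro w
      exact ⟨⟨σ w, hmem w⟩, hσ w⟩
  rw [Phi, dif_pos hbij]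
  refine LinearMap.ext fun w => ?_
  have hs : (LinearEquiv.ofBijective _ hbij).symm w = ⟨σ w, hmem w⟩ := by
    rw [LinearEquiv.symm_apply_eq]
    exact (hσ w).symm
  simp only [LinearMap.comp_apply, LinearEquiv.coe_coe, hs, Submodule.subtype_apply]
  exact gam_comp_of_mem_slice' m n hn _ hx (σ w)

/-- An element of `S_n'` with the same kernel as `τ` factors through `τ` via a section of `γ`. -/
theorem exists_section (m n : ℕ) (hn : 1 ≤ n) (x : Module.End ℂ (Fin (m + 2*n) → ℂ))
    (hx : x ∈ slice' m n) (hker : LinearMap.ker x = LinearMap.ker (tauMap m n)) :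
    ∃ σ : (Fin (m + 2*(n-1)) → ℂ) →ₗ[ℂ] (Fin (m + 2*n) → ℂ),
      (∀ w, gam m n (σ w) = w) ∧ x = σ ∘ₗ tauMap m n := by
  obtain ⟨s, hs⟩ := LinearMap.exists_rightInverse_of_surjective (tauMap m n)
    (LinearMap.range_eq_top.2 (tau_surjective m n hn))
  have hs' : ∀ w, tauMap m n (s w) = w := LinearMap.congr_fun hs
  refine ⟨x ∘ₗ s, fun w => ?_, ?_⟩
  · rw [LinearMap.comp_apply, gam_comp_of_mem_slice' m n hn x hx, hs']
  · refine LinearMap.ext fun v => ?_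
    have : v - s (tauMap m n v) ∈ LinearMap.ker x := by
      rw [hker, LinearMap.mem_ker, map_sub, hs', sub_self]
    rw [LinearMap.mem_ker, map_sub, sub_eq_zero] at this
    exact this

/-! ### The flags -/

/-- For `((V_i), x) ∈ A` a dimension count on `x : V_{k+1} → V_{k-1}` forces
`ker x = ker τ ⊆ V_{k+1}` and `x V_{k+1} = V_{k-1}`; in particular `x` factors as `σ ∘ τ`. -/
theorem SetA_data (m n k : ℕ) (hn : 1 ≤ n) (hk1 : 1 ≤ k) (hk2 : k ≤ m + 2*n - 1)
    (V : flagIdxA m n k → Submodule ℂ (Fin (m + 2*n) → ℂ))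
    (x : Module.End ℂ (Fin (m + 2*n) → ℂ)) (hp : (V, x) ∈ SetA m n k) :
    ∃ σ : (Fin (m + 2*(n-1)) → ℂ) →ₗ[ℂ] (Fin (m + 2*n) → ℂ),
      (∀ w, gam m n (σ w) = w) ∧ x = σ ∘ₗ tauMap m n ∧
      (∀ i, k + 1 ≤ i.val → LinearMap.ker (tauMap m n) ≤ V i) ∧
      (V ⟨k+1, by omega⟩).map x = V ⟨k-1, by omega⟩ ∧
      (∀ i, i.val ≤ k - 1 → ∀ v ∈ V i, σ (gam m n v) = v) := by
  obtain ⟨hx, hdim, -, -, hmono, hk, -⟩ := hp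
  dsimp only at hx hdim hmono hk
  have hle : LinearMap.ker x ≤ LinearMap.ker (tauMap m n) := by
    intro v hv
    rw [LinearMap.mem_ker] at hv ⊢
    rw [← gam_comp_of_mem_slice' m n hn x hx.1, hv, map_zero]
  have hmap : (V ⟨k+1, by omega⟩).map x ≤ V ⟨k-1, by omega⟩ := by
    rintro _ ⟨v, hv, rfl⟩
    exact hk _ _ rfl rfl v hv
  have e1 := finrank_map_add_inf_ker x (V ⟨k+1, by omega⟩)
  have e2 := Submodule.finrank_mono hmap
  have e3 := Submodule.finrank_mono hle
  have e4 : finrank ℂ (V ⟨k+1, by omega⟩ ⊓ LinearMap.ker x : Submodule ℂ _) ≤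
    finrank ℂ (LinearMap.ker x) := Submodule.finrank_mono inf_le_right
  rw [hdim] at e1 e2
  rw [finrank_ker_tau m n hn] at e3
  dsimp only at e1 e2
  have hker : LinearMap.ker x = LinearMap.ker (tauMap m n) := by
    apply Submodule.eq_of_le_of_finrank_le hle
    rw [finrank_ker_tau m n hn]
    omega
  have hinf : V ⟨k+1, by omega⟩ ⊓ LinearMap.ker x = LinearMap.ker x := by
    apply Submodule.eq_of_le_of_finrank_le inf_le_right
    omega
  have hmapeq : (V ⟨k+1, by omega⟩).map x = V ⟨k-1, by omega⟩ := by
    apply Submodule.eq_of_le_of_finrank_le hmap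
    rw [hdim]
    dsimp only
    omega
  obtain ⟨σ, hσ, hxσ⟩ := exists_section m n hn x hx.1 hker
  refine ⟨σ, hσ, hxσ, ?_, hmapeq, ?_⟩
  · intro i hi
    rw [← hker, ← hinf]
    exact inf_le_left.trans (hmono _ _ hi)
  · intro i hi v hv
    have : v ∈ (V ⟨k+1, by omega⟩).map x := by
      rw [hmapeq]
      exact hmono _ _ hi hv
    obtain ⟨v, -, rfl⟩ := this
    rw [hxσ, LinearMap.comp_apply, hσ]

theorem alphaMap_low (m n k : ℕ) (hn : 1 ≤ n) (hk1 : 1 ≤ k)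
    (V : flagIdxA m n k → Submodule ℂ (Fin (m + 2*n) → ℂ))
    (x : Module.End ℂ (Fin (m + 2*n) → ℂ)) (j : flagIdxB m n) (hj : j.val ≤ k - 1) :
    (alphaMap m n k hn hk1 (V, x)).1 j =
      (V ⟨j.val, by have := j.2; omega⟩).map (gam m n) :=
  dif_pos hj

theorem alphaMap_high (m n k : ℕ) (hn : 1 ≤ n) (hk1 : 1 ≤ k) (hk2 : k ≤ m + 2*n - 1)
    (V : flagIdxA m n k → Submodule ℂ (Fin (m + 2*n) → ℂ))
    (σ : (Fin (m + 2*(n-1)) → ℂ) →ₗ[ℂ] (Fin (m + 2*n) → ℂ)) (hσ : ∀ w, gam m n (σ w) = w)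
    (hV : (V ⟨k+1, by omega⟩).map (σ ∘ₗ tauMap m n) = V ⟨k-1, by omega⟩)
    (j : flagIdxB m n) (hj : k - 1 ≤ j.val) :
    (alphaMap m n k hn hk1 (V, σ ∘ₗ tauMap m n)).1 j =
      (V ⟨j.val + 2, by have := j.2; omega⟩).map (tauMap m n) := by
  rcases eq_or_lt_of_le hj with h | h
  · rw [alphaMap_low _ _ _ _ _ _ _ _ h.ge]
    obtain ⟨j, hj'⟩ := j
    dsimp only at h
    subst h
    dsimp only
    rw [← hV, map_gam_map m n σ hσ]
    congr 2
    ext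
    dsimp only
    omega
  · rw [← map_gam_map m n σ hσ]
    exact dif_neg (by omega)

theorem alphaMap_mapsTo (m n k : ℕ) (hn : 1 ≤ n) (hk1 : 1 ≤ k) (hk2 : k ≤ m + 2*n - 1) :
    Set.MapsTo (alphaMap m n k hn hk1) (SetA m n k) (SetB m n) := by
  rintro ⟨V, x⟩ hp
  obtain ⟨σ, hσ, rfl, hkerV, hVk, hσγ⟩ := SetA_data m n k hn hk1 hk2 V x hp
  obtain ⟨hx, hdim, hbot, htop, hmono, -, hstep⟩ := hp
  dsimp only at hx hdim hbot htop hmono hstep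
  have hlow := alphaMap_low m n k hn hk1 V (σ ∘ₗ tauMap m n)
  have hhigh := alphaMap_high m n k hn hk1 hk2 V σ hσ hVk
  have hPhi : (alphaMap m n k hn hk1 (V, σ ∘ₗ tauMap m n)).2 = tauMap m n ∘ₗ σ :=
    Phi_comp m n hn σ hσ hx.1
  have hmonoW : ∀ i j, i.val ≤ j.val → (alphaMap m n k hn hk1 (V, σ ∘ₗ tauMap m n)).1 i ≤
      (alphaMap m n k hn hk1 (V, σ ∘ₗ tauMap m n)).1 j := by
    -- Both descriptions of `W_j` hold at `j = k - 1`, so the mixed case follows by transitivity.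
    have h1 : ∀ i j, i.val ≤ j.val → j.val ≤ k - 1 →
        (alphaMap m n k hn hk1 (V, σ ∘ₗ tauMap m n)).1 i ≤
        (alphaMap m n k hn hk1 (V, σ ∘ₗ tauMap m n)).1 j := by
      intro i j hij hj
      rw [hlow i (hij.trans hj), hlow j hj]
      exact Submodule.map_mono (hmono _ _ hij)
    have h2 : ∀ i j, i.val ≤ j.val → k - 1 ≤ i.val →
        (alphaMap m n k hn hk1 (V, σ ∘ₗ tauMap m n)).1 i ≤
        (alphaMap m n k hn hk1 (V, σ ∘ₗ tauMap m n)).1 j := by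
      intro i j hij hi
      rw [hhigh i hi, hhigh j (hi.trans hij)]
      exact Submodule.map_mono (hmono _ _ (by dsimp only; omega))
    intro i j hij
    by_cases hj : j.val ≤ k - 1
    · exact h1 i j hij hj
    by_cases hi : k - 1 ≤ i.val
    · exact h2 i j hij hi
    exact (h1 i ⟨k - 1, by omega⟩ (by dsimp only; omega) le_rfl).trans
      (h2 _ j (by dsimp only; omega) le_rfl)
  refine ⟨?_, ?_, ?_, ?_, hmonoW, ?_⟩
  · rw [hPhi]
    exact tau_comp_mem m n hn σ hσ hx
  · intro j
    by_cases hj : j.val ≤ k - 1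
    · rw [hlow j hj]
      have e := finrank_map_add_inf_ker (gam m n) (V ⟨j.val, by have := j.2; omega⟩)
      have h0 : V ⟨j.val, by have := j.2; omega⟩ ⊓ LinearMap.ker (gam m n) = ⊥ := by
        rw [eq_bot_iff]
        rintro v ⟨hv, hv'⟩
        rw [Submodule.mem_bot, ← hσγ _ hj v hv, LinearMap.mem_ker.1 hv', map_zero]
      rw [h0, finrank_bot, hdim] at e
      exact e
    · rw [hhigh j (by omega)]
      have e := finrank_map_add_inf_ker (tauMap m n) (V ⟨j.val + 2, by have := j.2; omega⟩)
      rw [inf_eq_right.2 (hkerV _ (by dsimp only; omega)), finrank_ker_tau m n hn, hdim] at e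
      exact Nat.add_right_cancel e
  · intro j hj
    rw [hlow j (by omega), hbot _ hj, Submodule.map_bot]
  · intro j hj
    rw [hhigh j (by omega), htop _ (by dsimp only; omega), Submodule.map_top,
      LinearMap.range_eq_top.2 (tau_surjective m n hn)]
  · intro i j hij w hw
    rw [hPhi]
    by_cases hi : i.val ≤ k - 1
    · rw [hlow i hi] at hw
      rw [hlow j (by omega)]
      obtain ⟨v, hv, rfl⟩ := hw
      refine ⟨_, hstep _ ⟨j.val, by have := j.2; omega⟩ hij v hv, ?_⟩
      rw [LinearMap.comp_apply, LinearMap.comp_apply, hσ, hσγ _ hi v hv]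
    · rw [hhigh i (by omega)] at hw
      rw [hhigh j (by omega)]
      obtain ⟨v, hv, rfl⟩ := hw
      exact ⟨_, hstep _ ⟨j.val + 2, by have := j.2; omega⟩ (by dsimp only; omega) v hv, rfl⟩

theorem alphaMap_injOn (m n k : ℕ) (hn : 1 ≤ n) (hk1 : 1 ≤ k) (hk2 : k ≤ m + 2*n - 1) :
    Set.InjOn (alphaMap m n k hn hk1) (SetA m n k) := by
  rintro ⟨V, x⟩ hp ⟨V', x'⟩ hp' heq
  obtain ⟨σ, hσ, rfl, hkerV, hVk, hσγ⟩ := SetA_data m n k hn hk1 hk2 V x hp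
  obtain ⟨σ', hσ', rfl, hkerV', hVk', hσγ'⟩ := SetA_data m n k hn hk1 hk2 V' x' hp'
  have hΦ : tauMap m n ∘ₗ σ = tauMap m n ∘ₗ σ' := by
    rw [← Phi_comp m n hn σ hσ hp.1.1, ← Phi_comp m n hn σ' hσ' hp'.1.1]
    exact congrArg Prod.snd heq
  obtain rfl := section_unique m n hn σ σ' hσ hp.1 hσ' hp'.1 hΦ
  have hW : ∀ j, (alphaMap m n k hn hk1 (V, σ ∘ₗ tauMap m n)).1 j =
      (alphaMap m n k hn hk1 (V', σ ∘ₗ tauMap m n)).1 j := by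
    intro j
    rw [heq]
  congr 1
  funext i
  have hi := i.2
  by_cases h : i.val ≤ k - 1
  · have e := hW ⟨i.val, by omega⟩
    rw [alphaMap_low _ _ _ _ _ _ _ _ h, alphaMap_low _ _ _ _ _ _ _ _ h] at e
    have hrec : ∀ U : Submodule ℂ (Fin (m + 2*n) → ℂ), (∀ v ∈ U, σ (gam m n v) = v) →
        (U.map (gam m n)).map σ = U := by
      intro U hU
      ext v
      constructor
      · rintro ⟨_, ⟨v, hv, rfl⟩, rfl⟩
        rwa [hU v hv]
      · intro hv
        exact ⟨_, ⟨v, hv, rfl⟩, hU v hv⟩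
    rw [← hrec (V i) (hσγ i h), ← hrec (V' i) (hσγ' i h)]
    exact congrArg (Submodule.map σ) e
  · have e := hW ⟨i.val - 2, by omega⟩
    rw [alphaMap_high _ _ _ _ _ hk2 _ σ hσ hVk _ (by dsimp only; omega),
      alphaMap_high _ _ _ _ _ hk2 _ σ hσ hVk' _ (by dsimp only; omega)] at e
    have hidx : (⟨i.val - 2 + 2, by omega⟩ : flagIdxA m n k) = i := Subtype.ext (by
      dsimp only; omega)
    dsimp only at e
    rw [hidx] at e
    rw [← Submodule.comap_map_eq_self (hkerV i (by omega)),
      ← Submodule.comap_map_eq_self (hkerV' i (by omega)), e]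

theorem alphaMap_surjOn (m n k : ℕ) (hn : 1 ≤ n) (hk1 : 1 ≤ k) (hk2 : k ≤ m + 2*n - 1) :
    Set.SurjOn (alphaMap m n k hn hk1) (SetA m n k) (SetB m n) := by
  rintro ⟨W, y⟩ ⟨hy, hdim, hbot, htop, hmono, hstep⟩
  dsimp only at hy hdim hbot htop hmono hstep
  obtain ⟨σ, hσ, hx, hτσ⟩ : ∃ σ : (Fin (m + 2*(n-1)) → ℂ) →ₗ[ℂ] (Fin (m + 2*n) → ℂ),
      (∀ w, gam m n (σ w) = w) ∧ σ ∘ₗ tauMap m n ∈ MVslice m n ∧ tauMap m n ∘ₗ σ = y :=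
    ⟨sigmaOf m n y, gam_sigmaOf m n hn y, sigmaOf_tau_mem m n hn y hy, tau_sigmaOf m n hn y hy⟩
  subst hτσ
  have hσinj : Function.Injective σ := Function.LeftInverse.injective hσ
  have hτsurj := tau_surjective m n hn
  -- `τ ∘ σ` maps `W_i` into `W_j` whenever `i ≤ j + 1`; for `i = 0` because `W_0 = 0`.
  have hinv : ∀ i j, i.val ≤ j.val + 1 → ∀ w ∈ W i, tauMap m n (σ w) ∈ W j := by
    intro i j hij w hw
    rcases Nat.eq_zero_or_pos i.val with h0 | h0
    · rw [hbot i h0, Submodule.mem_bot] at hw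
      rw [hw, map_zero, map_zero]
      exact Submodule.zero_mem _
    · exact hmono ⟨i.val - 1, by have := i.2; omega⟩ j (by dsimp only; omega)
        (hstep i ⟨i.val - 1, by have := i.2; omega⟩ (by dsimp only; omega) w hw)
  let V : flagIdxA m n k → Submodule ℂ (Fin (m + 2*n) → ℂ) := fun i =>
    if h : i.val ≤ k - 1 then (W ⟨i.val, by omega⟩).map σ
    else (W ⟨i.val - 2, by have := i.2; omega⟩).comap (tauMap m n)
  have hVlow : ∀ (i : flagIdxA m n k) (h : i.val ≤ k - 1), V i = (W ⟨i.val, by omega⟩).map σ :=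
    fun i h => dif_pos h
  have hVhigh : ∀ (i : flagIdxA m n k) (_ : k + 1 ≤ i.val),
      V i = (W ⟨i.val - 2, by have := i.2; omega⟩).comap (tauMap m n) :=
    fun i h => dif_neg (by omega)
  have hcases : ∀ i : flagIdxA m n k, i.val ≤ k - 1 ∨ k + 1 ≤ i.val := by
    intro i
    have := i.2.2
    omega
  have hVk : (V ⟨k+1, by omega⟩).map (σ ∘ₗ tauMap m n) = V ⟨k-1, by omega⟩ := by
    rw [hVlow ⟨k-1, by omega⟩ le_rfl, hVhigh ⟨k+1, by omega⟩ le_rfl, Submodule.map_comp,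
      Submodule.map_comap_eq_of_surjective hτsurj]
    rfl
  refine ⟨(V, σ ∘ₗ tauMap m n), ⟨hx, ?_, ?_, ?_, ?_, ?_, ?_⟩, ?_⟩
  · intro i
    change finrank ℂ (V i) = i.val
    rcases hcases i with h | h
    · rw [hVlow i h, finrank_map_of_inj σ hσinj, hdim]
    · rw [hVhigh i h]
      have e := finrank_map_add_inf_ker (tauMap m n)
        ((W ⟨i.val - 2, by have := i.2; omega⟩).comap (tauMap m n))
      rw [Submodule.map_comap_eq_of_surjective hτsurj,
        inf_eq_right.2 (LinearMap.ker_le_comap _), finrank_ker_tau m n hn, hdim] at e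
      rw [← e]
      dsimp only
      omega
  · intro i hi
    dsimp only
    rw [hVlow i (by omega), hbot _ hi, Submodule.map_bot]
  · intro i hi
    dsimp only
    rw [hVhigh i (by omega), htop _ (by dsimp only; omega), Submodule.comap_top]
  · intro i j hij
    dsimp only
    rcases hcases j with hj | hj
    · rw [hVlow i (by omega), hVlow j hj]
      exact Submodule.map_mono (hmono _ _ hij)
    rcases hcases i with hi | hi
    · rw [hVlow i hi, hVhigh j hj]
      rintro _ ⟨w, hw, rfl⟩
      exact hinv _ _ (by dsimp only; omega) w hw
    · rw [hVhigh i hi, hVhigh j hj]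
      exact Submodule.comap_mono (hmono _ _ (by dsimp only; omega))
  · rintro ⟨i, hi'⟩ ⟨j, hj'⟩ hi hj v hv
    dsimp only at hi hj hv ⊢
    subst hi hj
    rw [← hVk]
    exact ⟨v, hv, rfl⟩
  · intro i j hij v hv
    dsimp only at hv ⊢
    rcases hcases i with hi | hi
    · rw [hVlow i hi] at hv
      rw [hVlow j (by omega)]
      obtain ⟨w, hw, rfl⟩ := hv
      exact ⟨_, hinv _ _ hij.le w hw, rfl⟩
    · have hj : k + 1 ≤ j.val := by
        have := j.2.2
        omega
      rw [hVhigh i hi] at hv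
      rw [hVhigh j hj]
      exact hinv _ _ (by dsimp only; omega) _ hv
  · refine Prod.ext (funext fun j => ?_) (Phi_comp m n hn σ hσ hx.1)
    by_cases hj : j.val ≤ k - 1
    · rw [alphaMap_low _ _ _ _ _ _ _ _ hj, hVlow _ hj, ← Submodule.map_comp]
      have : gam m n ∘ₗ σ = LinearMap.id := LinearMap.ext hσ
      rw [this, Submodule.map_id]
    · rw [alphaMap_high m n k hn hk1 hk2 V σ hσ hVk j (by omega),
        hVhigh _ (by dsimp only; omega), Submodule.map_comap_eq_of_surjective hτsurj]
      rfl

/-- The map `α : ((V_i), x) ↦ ((W_j), Φ(x))` is a well-defined bijection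
from `A` onto `B` (Proposition 2.3 of the paper). -/
theorem alphaMap_bijOn (m n k : ℕ) (hn : 1 ≤ n) (hk1 : 1 ≤ k) (hk2 : k ≤ m + 2*n - 1) :
    Set.BijOn (alphaMap m n k hn hk1) (SetA m n k) (SetB m n) :=
  ⟨alphaMap_mapsTo m n k hn hk1 hk2, alphaMap_injOn m n k hn hk1 hk2,
    alphaMap_surjOn m n k hn hk1 hk2⟩
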